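/- Let n ≥ p and let X be a full-rank real n×p matrix. The real vector space {WX | W ∈ ℝ^{n×n} skew-symmetric} (the image of the space of n×n skew-symmetric matrices under right multiplication by X) has dimension np − p(p+1)/2. -/

import Mathlib

open Matrix

/-- The image of the space of `n×n` skew-symmetric matrices under right
multiplication by `X`, i.e. `{W X | W skew-symmetric}`, as a linear subspace
of `ℝ^{n×p}`. -/
def skewImageSubmodule {n p : ℕ} (X : Matrix (Fin n) (Fin p) ℝ) :
    Submodule ℝ (Matrix (Fin n) (Fin p) ℝ) where
  carrier := {ξ : Matrix (Fin n) (Fin p) ℝ |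
    ∃ W : Matrix (Fin n) (Fin n) ℝ, Wᵀ = -W ∧ ξ = W * X}
  zero_mem' := ⟨0, by simp⟩
  add_mem' := by
    rintro a b ⟨Wa, hWa, rfl⟩ ⟨Wb, hWb, rfl⟩
    exact ⟨Wa + Wb, by rw [Matrix.transpose_add, hWa, hWb, neg_add],
      by rw [Matrix.add_mul]⟩
  smul_mem' := by
    rintro c a ⟨W, hW, rfl⟩
    exact ⟨c • W, by rw [Matrix.transpose_smul, hW, smul_neg],
      by rw [Matrix.smul_mul]⟩

/-!
The space `{W X | W skew-symmetric}` is the kernel of `ξ ↦ Xᵀ ξ + ξᵀ X`, a linear map onto the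
symmetric `p×p` matrices, so rank–nullity gives the dimension `n p - p (p + 1) / 2`.

Both facts follow from a left inverse `L` of `X`, which exists because `X` has full column rank.
If `Xᵀ ξ + ξᵀ X = 0`, then `W = ξ L - (ξ L)ᵀ + Lᵀ ξᵀ X L` is skew-symmetric and `W X = ξ`
(`mem_skewImageSubmodule_iff`). A symmetric `S` is the image of `½ Lᵀ S`
(`symPart_surjective`). Symmetric matrices are encoded as functions on unordered pairs of indices,
so that their dimension is the cardinality of `Sym2 (Fin p)`.
-/

lemma exists_left_inverse_of_rank_eq {n p : ℕ} (X : Matrix (Fin n) (Fin p) ℝ)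
    (hX : X.rank = p) : ∃ L : Matrix (Fin p) (Fin n) ℝ, L * X = 1 := by
  have hli : LinearIndependent ℝ X.col := by
    rw [linearIndependent_iff_card_eq_finrank_span, Set.finrank, ← Matrix.rank_eq_finrank_span_cols,
      hX, Fintype.card_fin]
  rw [← Matrix.mulVec_injective_iff] at hli
  obtain ⟨g, hg⟩ := LinearMap.exists_leftInverse_of_injective (Matrix.toLin' X)
    (LinearMap.ker_eq_bot.mpr hli)
  refine ⟨LinearMap.toMatrix' g, ?_⟩
  have h := congrArg LinearMap.toMatrix' hg
  rwa [LinearMap.toMatrix'_comp, LinearMap.toMatrix'_toLin', LinearMap.toMatrix'_id] at h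

lemma mem_skewImageSubmodule_iff {n p : ℕ} {X : Matrix (Fin n) (Fin p) ℝ}
    {L : Matrix (Fin p) (Fin n) ℝ} (hL : L * X = 1) (ξ : Matrix (Fin n) (Fin p) ℝ) :
    ξ ∈ skewImageSubmodule X ↔ Xᵀ * ξ + ξᵀ * X = 0 := by
  constructor
  · rintro ⟨W, hW, rfl⟩
    simp [Matrix.transpose_mul, hW, Matrix.mul_assoc]
  · intro h
    have h' : Xᵀ * ξ = -(ξᵀ * X) := eq_neg_of_add_eq_zero_left h
    refine ⟨ξ * L - (ξ * L)ᵀ + Lᵀ * (ξᵀ * X) * L, ?_, ?_⟩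
    · simp only [transpose_add, transpose_sub, transpose_mul, transpose_transpose, h',
        Matrix.mul_neg, Matrix.neg_mul, Matrix.mul_assoc]
      abel
    · simp only [transpose_mul, Matrix.add_mul, Matrix.sub_mul, Matrix.mul_assoc, hL,
        Matrix.mul_one]
      abel

/-- The linear map `ξ ↦ Xᵀ ξ + ξᵀ X`, whose values are symmetric `p×p` matrices. A symmetric
matrix is recorded as the function sending the unordered pair `s(i, j)` to its `(i, j)` entry. -/
def symPart {n p : ℕ} (X : Matrix (Fin n) (Fin p) ℝ) :
    Matrix (Fin n) (Fin p) ℝ →ₗ[ℝ] (Sym2 (Fin p) → ℝ) where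
  toFun ξ := Sym2.lift ⟨fun i j => (Xᵀ * ξ + ξᵀ * X) i j, fun i j => by
    have h : (Xᵀ * ξ + ξᵀ * X)ᵀ = Xᵀ * ξ + ξᵀ * X := by
      simp [Matrix.transpose_mul, add_comm]
    exact congrFun (congrFun h j) i⟩
  map_add' ξ η := by
    ext z
    induction z using Sym2.ind with
    | _ i j =>
      simp only [Sym2.lift_mk, Pi.add_apply, Matrix.mul_add, Matrix.add_mul, transpose_add,
        Matrix.add_apply]
      ring
  map_smul' c ξ := by
    ext z
    induction z using Sym2.ind with
    | _ i j => simp [mul_add]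

@[simp]
lemma symPart_mk {n p : ℕ} (X ξ : Matrix (Fin n) (Fin p) ℝ) (i j : Fin p) :
    symPart X ξ s(i, j) = (Xᵀ * ξ + ξᵀ * X) i j := rfl

lemma ker_symPart {n p : ℕ} {X : Matrix (Fin n) (Fin p) ℝ}
    {L : Matrix (Fin p) (Fin n) ℝ} (hL : L * X = 1) :
    LinearMap.ker (symPart X) = skewImageSubmodule X := by
  ext ξ
  rw [mem_skewImageSubmodule_iff hL, LinearMap.mem_ker]
  constructor
  · intro h
    ext i j
    exact congrFun h s(i, j)
  · intro h
    ext z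
    induction z using Sym2.ind with
    | _ i j => rw [symPart_mk, h]; rfl

lemma symPart_surjective {n p : ℕ} {X : Matrix (Fin n) (Fin p) ℝ}
    {L : Matrix (Fin p) (Fin n) ℝ} (hL : L * X = 1) :
    Function.Surjective (symPart X) := by
  intro f
  let S : Matrix (Fin p) (Fin p) ℝ := Matrix.of fun i j => f s(i, j)
  have hS : Sᵀ = S := by
    ext i j
    exact congrArg f Sym2.eq_swap
  have hL' : Xᵀ * Lᵀ = 1 := by rw [← transpose_mul, hL, transpose_one]
  refine ⟨(1 / 2 : ℝ) • (Lᵀ * S), ?_⟩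
  have key : Xᵀ * ((1 / 2 : ℝ) • (Lᵀ * S)) + ((1 / 2 : ℝ) • (Lᵀ * S))ᵀ * X = S := by
    rw [transpose_smul, transpose_mul, transpose_transpose, hS, Matrix.mul_smul, Matrix.smul_mul,
      ← Matrix.mul_assoc, hL', Matrix.one_mul, Matrix.mul_assoc, hL, Matrix.mul_one, ← add_smul]
    norm_num
  ext z
  induction z using Sym2.ind with
  | _ i j => rw [symPart_mk, key]; rfl

/-- For a full-rank `X ∈ ℝ^{n×p}` (`n ≥ p`), the space
`{W X | W skew-symmetric}` has dimension `np − p(p+1)/2`. -/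
theorem finrank_skewImageSubmodule {n p : ℕ} (hnp : p ≤ n)
    (X : Matrix (Fin n) (Fin p) ℝ) (hX : X.rank = p) :
    Module.finrank ℝ (skewImageSubmodule X) = n * p - p * (p + 1) / 2 := by
  obtain ⟨L, hL⟩ := exists_left_inverse_of_rank_eq X hX
  have hrn := LinearMap.finrank_range_add_finrank_ker (symPart X)
  rw [LinearMap.range_eq_top.mpr (symPart_surjective hL), finrank_top, ker_symPart hL,
    Module.finrank_fintype_fun_eq_card, Sym2.card, Module.finrank_matrix, Fintype.card_fin,
    Fintype.card_fin, Module.finrank_self, mul_one, Nat.choose_two_right, Nat.add_sub_cancel,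
    Nat.mul_comm (p + 1)] at hrn
  omega
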